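/- arXiv:2605.13562 — 2 statements merged into one kernel-verified Lean document; each statement's English description precedes it below -/
import Mathlib

section
/- Geometric pinching identity: suppose s₀ > 0 satisfies the free boundary condition tanh(φ(s₀)) = B(s₀)·K/(a·sinh(2s₀)), and let r := arcosh(A(s₀)·cosh(φ(s₀))). Then sinh(r)² − 4·K² = (B(s₀)² − 2·K²)²/(B(s₀)² − K²). In particular sinh(r) ≥ 2·K, with equality if and only if B(s₀)² = 2·K². -/
namespace MoriCatenoid

/-- Profile function `B(s) = √(a·cosh(2s) − 1/2)` of the Mori family. -/
noncomputable def B (a s : ℝ) : ℝ := Real.sqrt (a * Real.cosh (2 * s) - 1 / 2)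

/-- Profile function `A(s) = √(a·cosh(2s) + 1/2)` of the Mori family. -/
noncomputable def A (a s : ℝ) : ℝ := Real.sqrt (a * Real.cosh (2 * s) + 1 / 2)

/-- The constant `K = √(a² − 1/4)`. -/
noncomputable def K (a : ℝ) : ℝ := Real.sqrt (a ^ 2 - 1 / 4)

/-- The angle function `φ(s) = K·∫₀ˢ dt/(A(t)²·B(t))`. -/
noncomputable def φ (a s : ℝ) : ℝ := K a * ∫ t in (0:ℝ)..s, 1 / ((A a t) ^ 2 * B a t)

/-- The mode-one Jacobi field `f_*(s) = d/ds (A(s)·cosh(φ(s)))`. -/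
noncomputable def fstar (a s : ℝ) : ℝ := deriv (fun t => A a t * Real.cosh (φ a t)) s

/-- Squared norm of the second fundamental form, `|II|²(s) = 2·(B''(s)/B(s) − 1)`. -/
noncomputable def IIsq (a s : ℝ) : ℝ := 2 * (deriv (deriv (B a)) s / B a s - 1)

/-- The mode-`k` potential `W_k(s) = |II|²(s) − 2 − k²/B(s)²`. -/
noncomputable def W (a : ℝ) (k : ℤ) (s : ℝ) : ℝ := IIsq a s - 2 - (k : ℝ) ^ 2 / (B a s) ^ 2

/-- Inverse hyperbolic cosine: `arcosh x = log (x + √(x² − 1))`. -/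
noncomputable def arcosh (x : ℝ) : ℝ := Real.log (x + Real.sqrt (x ^ 2 - 1))

/-- The axial boost field `u_*(s) = −a·sinh(2s)/B(s)`. -/
noncomputable def ustar (a s : ℝ) : ℝ := -a * Real.sinh (2 * s) / B a s

/-- The radial quadratic form of mode `k`:
`S_k(u) = ∫_{−s₀}^{s₀} (B·u'² − B·W_k·u²) − coth(r)·B(s₀)·(u(s₀)² + u(−s₀)²)`,
where `u'` is the derivative of `u` within `[−s₀, s₀]`. -/
noncomputable def Sk (a s₀ r : ℝ) (k : ℤ) (u : ℝ → ℝ) : ℝ :=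
  (∫ s in (-s₀)..s₀,
      (B a s * (derivWithin u (Set.Icc (-s₀) s₀) s) ^ 2 - B a s * W a k s * u s ^ 2))
    - Real.cosh r / Real.sinh r * B a s₀ * (u s₀ ^ 2 + u (-s₀) ^ 2)

/-!
Write `S = a·sinh(2s)`. From `A² = B² + 1` and `S² = A²B² − K²` one gets
`S² − B²K² = A²(B² − K²)`. The free boundary condition `tanh θ = BK/S` says
`cosh²θ·(S² − B²K²) = S²`, so `cosh r = A·cosh θ` satisfies `cosh²r·(B² − K²) = A²B² − K²`, that is,
`sinh²r = B⁴/(B² − K²)`. Completing the square in `B⁴ − 4K²(B² − K²)` gives the pinching identity.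
-/

theorem sq_div_sub_sub_four_mul {F : Type*} [Field F] {x y : F} (hxy : x - y ≠ 0) :
    x ^ 2 / (x - y) - 4 * y = (x - 2 * y) ^ 2 / (x - y) := by
  field_simp
  ring

theorem cosh_sq_mul_sq_sub_sq_of_tanh_eq_div {θ p q : ℝ} (hq : q ≠ 0) (hθ : Real.tanh θ = p / q) :
    Real.cosh θ ^ 2 * (q ^ 2 - p ^ 2) = q ^ 2 := by
  have hcosh : Real.cosh θ ≠ 0 := (Real.cosh_pos θ).ne'
  have hcross : Real.sinh θ * q = p * Real.cosh θ := by
    rwa [Real.tanh_eq_sinh_div_cosh, div_eq_div_iff hcosh hq] at hθ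
  calc Real.cosh θ ^ 2 * (q ^ 2 - p ^ 2)
      = Real.cosh θ ^ 2 * q ^ 2 - (p * Real.cosh θ) ^ 2 := by ring
    _ = (Real.cosh θ ^ 2 - Real.sinh θ ^ 2) * q ^ 2 := by rw [← hcross]; ring
    _ = q ^ 2 := by rw [Real.cosh_sq_sub_sinh_sq, one_mul]

theorem arcosh_eq_real_arcosh (x : ℝ) : arcosh x = Real.arcosh x := rfl

theorem sinh_arcosh_nonneg {x : ℝ} (hx : 1 ≤ x) : 0 ≤ Real.sinh (arcosh x) :=
  Real.sinh_nonneg_iff.2 (arcosh_eq_real_arcosh x ▸ Real.arcosh_nonneg hx)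

theorem sinh_arcosh_sq {x : ℝ} (hx : 1 ≤ x) : Real.sinh (arcosh x) ^ 2 = x ^ 2 - 1 := by
  rw [arcosh_eq_real_arcosh, Real.sinh_sq, Real.cosh_arcosh hx]

section Profile

variable {a s θ : ℝ}

theorem half_le_mul_cosh (ha : 1 / 2 ≤ a) (x : ℝ) : 1 / 2 ≤ a * Real.cosh x :=
  ha.trans (le_mul_of_one_le_right (by linarith) (Real.one_le_cosh x))

theorem A_sq (ha : 0 ≤ a) (s : ℝ) : A a s ^ 2 = a * Real.cosh (2 * s) + 1 / 2 :=
  Real.sq_sqrt (by positivity)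

theorem B_sq (ha : 1 / 2 ≤ a) (s : ℝ) : B a s ^ 2 = a * Real.cosh (2 * s) - 1 / 2 :=
  Real.sq_sqrt (sub_nonneg.2 (half_le_mul_cosh ha _))

theorem K_sq (ha : 1 / 4 ≤ a ^ 2) : K a ^ 2 = a ^ 2 - 1 / 4 :=
  Real.sq_sqrt (sub_nonneg.2 ha)

theorem A_sq_eq_B_sq_add_one (ha : 1 / 2 ≤ a) (s : ℝ) : A a s ^ 2 = B a s ^ 2 + 1 := by
  linarith [A_sq (by linarith : 0 ≤ a) s, B_sq ha s]

theorem sq_mul_sinh_two_mul (ha : 1 / 2 ≤ a) (s : ℝ) :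
    (a * Real.sinh (2 * s)) ^ 2 = A a s ^ 2 * B a s ^ 2 - K a ^ 2 := by
  have ha_nonneg : 0 ≤ a := by linarith
  have ha_sq : 1 / 4 ≤ a ^ 2 := by nlinarith
  rw [A_sq ha_nonneg, B_sq ha, K_sq ha_sq, mul_pow, Real.sinh_sq]
  ring

theorem mul_sinh_two_mul_ne_zero (ha : a ≠ 0) (hs : s ≠ 0) : a * Real.sinh (2 * s) ≠ 0 :=
  mul_ne_zero ha (Real.sinh_ne_zero.2 (mul_ne_zero two_ne_zero hs))

theorem one_le_A_mul_cosh (ha : 1 / 2 ≤ a) (s θ : ℝ) : 1 ≤ A a s * Real.cosh θ := by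
  have hA : 1 ≤ A a s := Real.one_le_sqrt.2 (by linarith [half_le_mul_cosh ha (2 * s)])
  exact one_le_mul_of_one_le_of_one_le hA (Real.one_le_cosh θ)

theorem A_mul_cosh_sq_mul_B_sq_sub_K_sq (ha : 1 / 2 ≤ a) (hs : s ≠ 0)
    (hθ : Real.tanh θ = B a s * K a / (a * Real.sinh (2 * s))) :
    (A a s * Real.cosh θ) ^ 2 * (B a s ^ 2 - K a ^ 2) = (a * Real.sinh (2 * s)) ^ 2 := by
  have hS : a * Real.sinh (2 * s) ≠ 0 := mul_sinh_two_mul_ne_zero (by linarith) hs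
  have hfactor : (a * Real.sinh (2 * s)) ^ 2 - (B a s * K a) ^ 2
      = A a s ^ 2 * (B a s ^ 2 - K a ^ 2) := by
    rw [sq_mul_sinh_two_mul ha, A_sq_eq_B_sq_add_one ha]
    ring
  rw [← cosh_sq_mul_sq_sub_sq_of_tanh_eq_div hS hθ, hfactor]
  ring

theorem K_sq_lt_B_sq (ha : 1 / 2 ≤ a) (hs : s ≠ 0)
    (hθ : Real.tanh θ = B a s * K a / (a * Real.sinh (2 * s))) : K a ^ 2 < B a s ^ 2 := by
  have hpos : 0 < (A a s * Real.cosh θ) ^ 2 * (B a s ^ 2 - K a ^ 2) := by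
    rw [A_mul_cosh_sq_mul_B_sq_sub_K_sq ha hs hθ]
    exact sq_pos_iff.2 (mul_sinh_two_mul_ne_zero (by linarith) hs)
  exact sub_pos.1 (pos_of_mul_pos_right hpos (sq_nonneg _))

theorem sinh_arcosh_A_mul_cosh_sq (ha : 1 / 2 ≤ a) (hs : s ≠ 0)
    (hθ : Real.tanh θ = B a s * K a / (a * Real.sinh (2 * s))) :
    Real.sinh (arcosh (A a s * Real.cosh θ)) ^ 2
      = (B a s ^ 2) ^ 2 / (B a s ^ 2 - K a ^ 2) := by
  have hgap : B a s ^ 2 - K a ^ 2 ≠ 0 := (sub_pos.2 (K_sq_lt_B_sq ha hs hθ)).ne'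
  rw [sinh_arcosh_sq (one_le_A_mul_cosh ha s θ), eq_div_iff hgap, sub_one_mul,
    A_mul_cosh_sq_mul_B_sq_sub_K_sq ha hs hθ, sq_mul_sinh_two_mul ha, A_sq_eq_B_sq_add_one ha]
  ring

end Profile

theorem pinching_identity_general {a s θ r : ℝ} (ha : 1 / 2 ≤ a) (hs : s ≠ 0)
    (hθ : Real.tanh θ = B a s * K a / (a * Real.sinh (2 * s)))
    (hr : r = arcosh (A a s * Real.cosh θ)) :
    Real.sinh r ^ 2 - 4 * K a ^ 2
      = (B a s ^ 2 - 2 * K a ^ 2) ^ 2 / (B a s ^ 2 - K a ^ 2) ∧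
    2 * K a ≤ Real.sinh r ∧
    (Real.sinh r = 2 * K a ↔ B a s ^ 2 = 2 * K a ^ 2) := by
  have hgap : 0 < B a s ^ 2 - K a ^ 2 := sub_pos.2 (K_sq_lt_B_sq ha hs hθ)
  have hsinh : 0 ≤ Real.sinh r := hr ▸ sinh_arcosh_nonneg (one_le_A_mul_cosh ha s θ)
  have hK : 0 ≤ 2 * K a := mul_nonneg zero_le_two (Real.sqrt_nonneg _)
  have hpinch : Real.sinh r ^ 2 - 4 * K a ^ 2
      = (B a s ^ 2 - 2 * K a ^ 2) ^ 2 / (B a s ^ 2 - K a ^ 2) := by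
    rw [hr, sinh_arcosh_A_mul_cosh_sq ha hs hθ, sq_div_sub_sub_four_mul hgap.ne']
  have hfour : (2 * K a) ^ 2 = 4 * K a ^ 2 := by ring
  refine ⟨hpinch, ?_, ?_⟩
  · rw [← sq_le_sq₀ hK hsinh, hfour, ← sub_nonneg, hpinch]
    positivity
  · rw [← sq_eq_sq₀ hsinh hK, hfour, ← sub_eq_zero, hpinch, div_eq_zero_iff,
      or_iff_left hgap.ne', sq_eq_zero_iff, sub_eq_zero]

/-- Geometric pinching identity: under the free boundary condition,
`sinh(r)² − 4·K² = (B(s₀)² − 2·K²)²/(B(s₀)² − K²)`; in particular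
`sinh(r) ≥ 2·K`, with equality iff `B(s₀)² = 2·K²`. -/
theorem pinching_identity (a : ℝ) (ha : 1 / 2 < a) (s₀ : ℝ) (hs₀ : 0 < s₀)
    (hFBC : Real.tanh (φ a s₀) = B a s₀ * K a / (a * Real.sinh (2 * s₀)))
    (r : ℝ) (hr : r = arcosh (A a s₀ * Real.cosh (φ a s₀))) :
    Real.sinh r ^ 2 - 4 * K a ^ 2
      = (B a s₀ ^ 2 - 2 * K a ^ 2) ^ 2 / (B a s₀ ^ 2 - K a ^ 2) ∧
    2 * K a ≤ Real.sinh r ∧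
    (Real.sinh r = 2 * K a ↔ B a s₀ ^ 2 = 2 * K a ^ 2) :=
  pinching_identity_general ha.le hs₀.ne' hFBC hr

end MoriCatenoid
end

section
/- Upper bound on the angle function at the pinching point: for every a > 1/2, setting s* := (1/2)·arcosh(2a), one has φ(s*) < s*/√(a + 1/2), and consequently tanh(φ(s*)) < arcosh(2a)/(2·√(a + 1/2)). -/
namespace MoriCatenoid

/-!
Both profile functions are smallest at `0`, and `K = A(0)·B(0)`. Hence for `s ≠ 0`
`φ'(s) = A(0)·B(0) / (A(s)²·B(s)) < 1 / A(0) = 1 / √(a + 1/2)`,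
and the mean value inequality on `[0, ∞)` gives `φ(s) < s / √(a + 1/2)` for every `s > 0`, in
particular at the pinching point. The second bound follows from `tanh x < x` for `x > 0`.
-/

section

variable {a s x : ℝ}

theorem arcosh_pos (hx : 1 < x) : 0 < arcosh x :=
  Real.arcosh_pos hx

theorem tanh_lt_self (hx : 0 < x) : Real.tanh x < x := by
  have deriv_sinh_lt : ∀ y ∈ interior (Set.Icc 0 x), deriv Real.sinh y < Real.cosh x := by
    intro y hy
    rw [interior_Icc] at hy
    rw [Real.deriv_sinh]
    exact Real.cosh_strictMonoOn hy.1.le hx.le hy.2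
  have sinh_lt : Real.sinh x - Real.sinh 0 < Real.cosh x * (x - 0) :=
    (convex_Icc 0 x).image_sub_lt_mul_sub_of_deriv_lt Real.continuous_sinh.continuousOn
      Real.differentiable_sinh.differentiableOn deriv_sinh_lt 0 (Set.left_mem_Icc.2 hx.le)
      x (Set.right_mem_Icc.2 hx.le) hx
  rw [Real.tanh_eq_sinh_div_cosh, div_lt_iff₀' (Real.cosh_pos x)]
  simpa using sinh_lt

theorem A_zero (a : ℝ) : A a 0 = √(a + 1 / 2) := by
  simp [A]

theorem B_zero (a : ℝ) : B a 0 = √(a - 1 / 2) := by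
  simp [B]

theorem continuous_A (a : ℝ) : Continuous (A a) := by
  unfold A
  fun_prop

theorem continuous_B (a : ℝ) : Continuous (B a) := by
  unfold B
  fun_prop

theorem A_pos (ha : 0 ≤ a) (s : ℝ) : 0 < A a s := by
  have := Real.cosh_pos (2 * s)
  exact Real.sqrt_pos.2 (by positivity)

theorem A_zero_lt_A (ha : 0 < a) (hs : s ≠ 0) : A a 0 < A a s := by
  have one_lt_cosh : 1 < Real.cosh (2 * s) := Real.one_lt_cosh.2 (by simpa using hs)
  rw [A_zero, A]
  gcongr
  exact lt_mul_of_one_lt_right ha one_lt_cosh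

theorem B_zero_le_B (ha : 0 ≤ a) (s : ℝ) : B a 0 ≤ B a s := by
  rw [B_zero, B]
  gcongr
  exact le_mul_of_one_le_right ha (Real.one_le_cosh _)

theorem B_pos (ha : 1 / 2 < a) (s : ℝ) : 0 < B a s := by
  have B_zero_pos : 0 < B a 0 := by
    rw [B_zero]
    exact Real.sqrt_pos.2 (sub_pos.2 ha)
  exact B_zero_pos.trans_le (B_zero_le_B (by linarith) s)

theorem K_eq_A_zero_mul_B_zero (ha : -(1 / 2) ≤ a) : K a = A a 0 * B a 0 := by
  rw [A_zero, B_zero, ← Real.sqrt_mul (by linarith), K]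
  ring_nf

theorem K_pos (ha : 1 / 2 < a) : 0 < K a := by
  rw [K_eq_A_zero_mul_B_zero (by linarith)]
  exact mul_pos (A_pos (by linarith) 0) (B_pos ha 0)

theorem A_sq_mul_B_pos (ha : 1 / 2 < a) (s : ℝ) : 0 < A a s ^ 2 * B a s :=
  mul_pos (pow_pos (A_pos (by linarith) s) 2) (B_pos ha s)

theorem φ_zero (a : ℝ) : φ a 0 = 0 := by
  simp [φ]

theorem hasDerivAt_φ (ha : 1 / 2 < a) (s : ℝ) :
    HasDerivAt (φ a) (K a / (A a s ^ 2 * B a s)) s := by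
  have continuous_integrand : Continuous fun t => 1 / (A a t ^ 2 * B a t) :=
    continuous_const.div (((continuous_A a).pow 2).mul (continuous_B a))
      fun t => (A_sq_mul_B_pos ha t).ne'
  rw [div_eq_mul_one_div]
  exact (continuous_integrand.integral_hasStrictDerivAt 0 s).hasDerivAt.const_mul (K a)

theorem differentiable_φ (ha : 1 / 2 < a) : Differentiable ℝ (φ a) :=
  fun s => (hasDerivAt_φ ha s).differentiableAt

theorem strictMono_φ (ha : 1 / 2 < a) : StrictMono (φ a) := by
  refine strictMono_of_deriv_pos fun s => ?_
  rw [(hasDerivAt_φ ha s).deriv]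
  exact div_pos (K_pos ha) (A_sq_mul_B_pos ha s)

theorem φ_pos (ha : 1 / 2 < a) (hs : 0 < s) : 0 < φ a s := by
  simpa only [φ_zero] using strictMono_φ ha hs

theorem deriv_φ_lt_inv_A_zero (ha : 1 / 2 < a) (hs : s ≠ 0) : deriv (φ a) s < (A a 0)⁻¹ := by
  have ha₀ : 0 < a := by linarith
  have A_zero_pos : 0 < A a 0 := A_pos ha₀.le 0
  rw [(hasDerivAt_φ ha s).deriv, inv_eq_one_div, div_lt_div_iff₀ (A_sq_mul_B_pos ha s) A_zero_pos]
  calc K a * A a 0 = A a 0 ^ 2 * B a 0 := by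
        rw [K_eq_A_zero_mul_B_zero (by linarith)]
        ring
    _ < A a s ^ 2 * B a s :=
        mul_lt_mul (pow_lt_pow_left₀ (A_zero_lt_A ha₀ hs) A_zero_pos.le two_ne_zero)
          (B_zero_le_B ha₀.le s) (B_pos ha 0) (sq_nonneg _)
    _ = 1 * (A a s ^ 2 * B a s) := (one_mul _).symm

theorem φ_lt_div_A_zero (ha : 1 / 2 < a) (hs : 0 < s) : φ a s < s / A a 0 := by
  have deriv_lt : ∀ t ∈ interior (Set.Ici (0 : ℝ)), deriv (φ a) t < (A a 0)⁻¹ := by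
    intro t ht
    rw [interior_Ici] at ht
    exact deriv_φ_lt_inv_A_zero ha ht.ne'
  have sub_lt : φ a s - φ a 0 < (A a 0)⁻¹ * (s - 0) :=
    (convex_Ici 0).image_sub_lt_mul_sub_of_deriv_lt (differentiable_φ ha).continuous.continuousOn
      (differentiable_φ ha).differentiableOn deriv_lt 0 Set.self_mem_Ici s hs.le hs
  rwa [φ_zero, sub_zero, sub_zero, inv_mul_eq_div] at sub_lt

theorem angle_bound_at_pinching_general (ha : 1 / 2 < a) (hs : 0 < s) :
    φ a s < s / √(a + 1 / 2) ∧ Real.tanh (φ a s) < s / √(a + 1 / 2) := by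
  have φ_lt : φ a s < s / √(a + 1 / 2) := A_zero a ▸ φ_lt_div_A_zero ha hs
  exact ⟨φ_lt, (tanh_lt_self (φ_pos ha hs)).trans φ_lt⟩

end

/-- Upper bound on the angle function at the pinching point: with
`s* = (1/2)·arcosh(2a)`, one has `φ(s*) < s*/√(a + 1/2)` and consequently
`tanh(φ(s*)) < arcosh(2a)/(2·√(a + 1/2))`. -/
theorem angle_bound_at_pinching (a : ℝ) (ha : 1 / 2 < a) (sstar : ℝ)
    (hsstar : sstar = 1 / 2 * arcosh (2 * a)) :
    φ a sstar < sstar / Real.sqrt (a + 1 / 2) ∧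
    Real.tanh (φ a sstar) < arcosh (2 * a) / (2 * Real.sqrt (a + 1 / 2)) := by
  have hs : 0 < sstar := hsstar ▸ mul_pos one_half_pos (arcosh_pos (by linarith))
  have bound_eq : arcosh (2 * a) / (2 * √(a + 1 / 2)) = sstar / √(a + 1 / 2) := by
    rw [hsstar]
    ring
  exact bound_eq ▸ angle_bound_at_pinching_general ha hs

end MoriCatenoid
end
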